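/- Let f : ℝ → ℝ be a positive continuous 2π-periodic function and let u : ℝ → ℝ be a 2π-periodic C¹ function with ∫₀^{2π} f(θ)u(θ) dθ = 0. Then ∫₀^{2π} (u'(θ))² dθ ≥ [(∫₀^{2π} f dθ)² / (2π · ∫₀^{2π} f² dθ)] · ∫₀^{2π} u(θ)² dθ. In particular, the constant (∫₀^{2π} f dθ)² / (2π ∫₀^{2π} f² dθ) is strictly positive. -/

import Mathlib

open Real

/-!
Apply Bessel's inequality in `L²` to the constant function `1` and the orthogonal pair `f`, `u`:
with `L` the length of the interval,
`|∫ f|² ∫ |u|² + |∫ u|² ∫ |f|² ≤ L ∫ |f|² ∫ |u|²`.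
Hence `|∫ f|² ∫ |u|²` is at most `∫ |f|²` times the defect `L ∫ |u|² - |∫ u|²`, which Wirtinger's
inequality bounds by `L (L / 2π)² ∫ |u'|²`. Wirtinger's inequality itself is a comparison of the
Fourier coefficients of `u` and `u'` via Parseval.
-/

section InnerProductSpace

variable {𝕜 E : Type*} [RCLike 𝕜] [NormedAddCommGroup E] [InnerProductSpace 𝕜 E]

theorem norm_inner_sq_mul_norm_sq_add_le_of_inner_eq_zero {x y : E} (hxy : inner 𝕜 x y = 0)
    (z : E) :
    ‖inner 𝕜 x z‖ ^ 2 * ‖y‖ ^ 2 + ‖inner 𝕜 y z‖ ^ 2 * ‖x‖ ^ 2 ≤ ‖z‖ ^ 2 * ‖x‖ ^ 2 * ‖y‖ ^ 2 := by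
  rcases eq_or_ne x 0 with rfl | hx
  · simp
  rcases eq_or_ne y 0 with rfl | hy
  · simp
  have normalized : Orthonormal 𝕜 ![(‖x‖⁻¹ : 𝕜) • x, (‖y‖⁻¹ : 𝕜) • y] := by
    simp [orthonormal_vecCons_iff, norm_smul, inner_smul_left, inner_smul_right, hxy, hx, hy]
  have bessel : (‖x‖⁻¹ * ‖inner 𝕜 x z‖) ^ 2 + (‖y‖⁻¹ * ‖inner 𝕜 y z‖) ^ 2 ≤ ‖z‖ ^ 2 := by
    simpa [inner_smul_left] using normalized.sum_inner_products_le (s := Finset.univ) z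
  have hx' : ‖x‖ ≠ 0 := norm_ne_zero_iff.mpr hx
  have hy' : ‖y‖ ≠ 0 := norm_ne_zero_iff.mpr hy
  calc
    _ = ((‖x‖⁻¹ * ‖inner 𝕜 x z‖) ^ 2 + (‖y‖⁻¹ * ‖inner 𝕜 y z‖) ^ 2) * (‖x‖ ^ 2 * ‖y‖ ^ 2) := by
      field_simp
    _ ≤ ‖z‖ ^ 2 * (‖x‖ ^ 2 * ‖y‖ ^ 2) := by gcongr
    _ = _ := by ring

end InnerProductSpace

section SquareIntegrable

open MeasureTheory

variable {α : Type*} {m : MeasurableSpace α} {μ : Measure α}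

theorem integral_norm_sq_pos_of_integral_ne_zero {E : Type*} [NormedAddCommGroup E]
    [NormedSpace ℝ E] {f : α → E} (hf : MemLp f 2 μ) (hf_int : ∫ x, f x ∂μ ≠ 0) :
    0 < ∫ x, ‖f x‖ ^ 2 ∂μ := by
  have hf_nonneg : 0 ≤ fun x ↦ ‖f x‖ ^ 2 := fun x ↦ sq_nonneg _
  refine (integral_nonneg hf_nonneg).lt_of_ne' fun hzero ↦ hf_int (integral_eq_zero_of_ae ?_)
  filter_upwards [(integral_eq_zero_iff_of_nonneg hf_nonneg hf.norm.integrable_sq).mp hzero]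
    with x hx
  simpa using hx

theorem memLp_restrict_of_continuousOn_isCompact {X E : Type*} [TopologicalSpace X]
    [MeasurableSpace X] [OpensMeasurableSpace X] [NormedAddCommGroup E] {ν : Measure X}
    [IsFiniteMeasureOnCompacts ν] {K : Set X} (hK : IsCompact K) (hK_meas : MeasurableSet K)
    {f : X → E} (hf : ContinuousOn f K) (p : ENNReal) : MemLp f p (ν.restrict K) := by
  have : IsFiniteMeasure (ν.restrict K) := isFiniteMeasure_restrict.mpr hK.measure_ne_top
  obtain ⟨C, hC⟩ := hK.exists_bound_of_continuousOn hf
  refine .of_bound (hf.aestronglyMeasurable_of_isCompact hK hK_meas) C ?_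
  filter_upwards [ae_restrict_mem hK_meas] with x hx using hC x hx

theorem memLp_restrict_Ioc_of_continuousOn_Icc {E : Type*} [NormedAddCommGroup E]
    {ν : Measure ℝ} [IsFiniteMeasureOnCompacts ν] {a b : ℝ} {f : ℝ → E}
    (hf : ContinuousOn f (Set.Icc a b)) (p : ENNReal) : MemLp f p (ν.restrict (Set.Ioc a b)) :=
  (memLp_restrict_of_continuousOn_isCompact isCompact_Icc measurableSet_Icc hf p).mono_measure
    (Measure.restrict_mono Set.Ioc_subset_Icc_self le_rfl)

theorem norm_toLp_sq_eq_integral_norm_sq {E : Type*} [NormedAddCommGroup E] {f : α → E}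
    (hf : MemLp f 2 μ) : ‖hf.toLp f‖ ^ 2 = ∫ x, ‖f x‖ ^ 2 ∂μ := by
  have h_nonneg : 0 ≤ ∫ x, ‖f x‖ ^ 2 ∂μ := integral_nonneg fun x ↦ sq_nonneg _
  rw [Lp.norm_toLp, hf.eLpNorm_eq_integral_rpow_norm two_ne_zero ENNReal.ofNat_ne_top]
  simp [← sqrt_eq_rpow, ← one_div, sq_sqrt h_nonneg]

variable {𝕜 : Type*} [RCLike 𝕜]

theorem inner_toLp_eq_integral_inner {E : Type*} [NormedAddCommGroup E] [InnerProductSpace 𝕜 E]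
    {f g : α → E} (hf : MemLp f 2 μ) (hg : MemLp g 2 μ) :
    inner 𝕜 (hf.toLp f) (hg.toLp g) = ∫ x, inner 𝕜 (f x) (g x) ∂μ := by
  rw [L2.inner_def]
  refine integral_congr_ae ?_
  filter_upwards [hf.coeFn_toLp, hg.coeFn_toLp] with x hfx hgx
  rw [hfx, hgx]

theorem norm_integral_sq_mul_integral_norm_sq_add_le [IsFiniteMeasure μ] {f u : α → 𝕜}
    (hf : MemLp f 2 μ) (hu : MemLp u 2 μ) (hfu : ∫ x, inner 𝕜 (f x) (u x) ∂μ = 0) :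
    ‖∫ x, f x ∂μ‖ ^ 2 * ∫ x, ‖u x‖ ^ 2 ∂μ + ‖∫ x, u x ∂μ‖ ^ 2 * ∫ x, ‖f x‖ ^ 2 ∂μ ≤
      μ.real Set.univ * (∫ x, ‖f x‖ ^ 2 ∂μ) * ∫ x, ‖u x‖ ^ 2 ∂μ := by
  have hone : MemLp (fun _ : α ↦ (1 : 𝕜)) 2 μ := memLp_const 1
  have norm_inner_one {g : α → 𝕜} (hg : MemLp g 2 μ) :
      ‖inner 𝕜 (hg.toLp g) (hone.toLp _)‖ = ‖∫ x, g x ∂μ‖ := by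
    rw [norm_inner_symm, inner_toLp_eq_integral_inner]
    simp
  have bessel := norm_inner_sq_mul_norm_sq_add_le_of_inner_eq_zero (𝕜 := 𝕜)
    ((inner_toLp_eq_integral_inner hf hu).trans hfu) (hone.toLp _)
  simpa only [norm_inner_one, norm_toLp_sq_eq_integral_norm_sq, norm_one, one_pow,
    integral_const, smul_eq_mul, mul_one] using bessel

end SquareIntegrable

section Fourier

open MeasureTheory Set
open scoped ComplexConjugate

variable {a b : ℝ}

theorem fourierCoeffOn_zero {E : Type*} [NormedAddCommGroup E] [NormedSpace ℂ E] (hab : a < b)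
    (f : ℝ → E) : fourierCoeffOn hab f 0 = (b - a)⁻¹ • ∫ x in a..b, f x := by
  simp [fourierCoeffOn_eq_integral]

variable {u u' : ℝ → ℂ}

theorem norm_fourierCoeffOn_of_hasDeriv_right (hab : a < b) {n : ℤ} (hn : n ≠ 0)
    (hu : ContinuousOn u (Icc a b))
    (huu' : ∀ x ∈ Ioo a b, HasDerivWithinAt u (u' x) (Ioi x) x)
    (hu' : IntervalIntegrable u' volume a b) (hu_per : u a = u b) :
    ‖fourierCoeffOn hab u n‖ = (b - a) / (2 * π * |(n : ℝ)|) * ‖fourierCoeffOn hab u' n‖ := by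
  rw [fourierCoeffOn_of_hasDeriv_right hab hn (by rwa [uIcc_of_le hab.le])
    (by simpa [hab.le] using huu') hu', hu_per, ← Complex.ofReal_sub]
  simp only [sub_self, mul_zero, zero_sub, norm_mul, norm_neg, norm_div, norm_one,
    Complex.norm_I, Complex.norm_real, Complex.norm_intCast, Complex.norm_ofNat, mul_one,
    Real.norm_eq_abs, abs_of_pos pi_pos, abs_of_pos (sub_pos.mpr hab)]
  ring

/-- The left-hand side is `∫ ‖u - m‖²`, where `m` is the mean of `u`. -/
theorem wirtinger_inequality (hab : a < b) (hu : ContinuousOn u (Icc a b))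
    (huu' : ∀ x ∈ Ioo a b, HasDerivWithinAt u (u' x) (Ioi x) x)
    (hu' : MemLp u' 2 (volume.restrict (Ioc a b))) (hu_per : u a = u b) :
    (∫ x in a..b, ‖u x‖ ^ 2) - (b - a)⁻¹ * ‖∫ x in a..b, u x‖ ^ 2 ≤
      ((b - a) / (2 * π)) ^ 2 * ∫ x in a..b, ‖u' x‖ ^ 2 := by
  have hba : 0 < b - a := sub_pos.mpr hab
  have hu_L2 : MemLp u 2 (volume.restrict (Ioc a b)) :=
    memLp_restrict_Ioc_of_continuousOn_Icc hu 2
  have hu'_int : IntervalIntegrable u' volume a b :=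
    (intervalIntegrable_iff_integrableOn_Ioc_of_le hab.le).mpr (hu'.integrable one_le_two)
  have coeff_le (n : ℤ) : ‖fourierCoeffOn hab u n‖ ^ 2 ≤
      ((b - a) / (2 * π)) ^ 2 * ‖fourierCoeffOn hab u' n‖ ^ 2 +
        if n = 0 then ‖fourierCoeffOn hab u 0‖ ^ 2 else 0 := by
    rcases eq_or_ne n 0 with rfl | hn
    · simp only [if_true]
      exact le_add_of_nonneg_left (by positivity)
    · have one_le_abs : (1 : ℝ) ≤ |(n : ℝ)| := by exact_mod_cast Int.one_le_abs hn
      rw [norm_fourierCoeffOn_of_hasDeriv_right hab hn hu huu' hu'_int hu_per, if_neg hn,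
        add_zero, ← mul_pow]
      gcongr ((b - a) / ?_ * _) ^ 2
      exact le_mul_of_one_le_right two_pi_pos.le one_le_abs
  have parseval := hasSum_le coeff_le (hasSum_sq_fourierCoeffOn hab hu_L2)
    (((hasSum_sq_fourierCoeffOn hab hu').mul_left _).add (hasSum_ite_eq 0 _))
  rw [fourierCoeffOn_zero, norm_smul, Real.norm_of_nonneg (inv_nonneg.mpr hba.le)] at parseval
  simp only [smul_eq_mul] at parseval
  rw [sub_le_iff_le_add]
  calc
    _ = (b - a) * ((b - a)⁻¹ * ∫ x in a..b, ‖u x‖ ^ 2) := by field_simp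
    _ ≤ _ := mul_le_mul_of_nonneg_left parseval hba.le
    _ = _ := by field_simp

theorem norm_integral_sq_mul_integral_norm_sq_le_of_hasDeriv_right (hab : a < b) {f : ℝ → ℂ}
    (hf : MemLp f 2 (volume.restrict (Ioc a b))) (hu : ContinuousOn u (Icc a b))
    (huu' : ∀ x ∈ Ioo a b, HasDerivWithinAt u (u' x) (Ioi x) x)
    (hu' : MemLp u' 2 (volume.restrict (Ioc a b))) (hu_per : u a = u b)
    (hfu : ∫ x in a..b, conj (f x) * u x = 0) :
    ‖∫ x in a..b, f x‖ ^ 2 * (∫ x in a..b, ‖u x‖ ^ 2) ≤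
      (b - a) * (∫ x in a..b, ‖f x‖ ^ 2) *
        (((b - a) / (2 * π)) ^ 2 * ∫ x in a..b, ‖u' x‖ ^ 2) := by
  have hba : 0 < b - a := sub_pos.mpr hab
  have wirtinger := wirtinger_inequality hab hu huu' hu' hu_per
  simp only [intervalIntegral.integral_of_le hab.le] at hfu wirtinger ⊢
  have bessel := norm_integral_sq_mul_integral_norm_sq_add_le hf
    (memLp_restrict_Ioc_of_continuousOn_Icc hu 2) (by simpa [mul_comm] using hfu)
  simp only [measureReal_restrict_apply_univ, volume_real_Ioc_of_le hab.le] at bessel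
  calc
    _ ≤ (b - a) * (∫ x in Ioc a b, ‖f x‖ ^ 2) * (∫ x in Ioc a b, ‖u x‖ ^ 2) -
        ‖∫ x in Ioc a b, u x‖ ^ 2 * ∫ x in Ioc a b, ‖f x‖ ^ 2 := le_sub_right_of_add_le bessel
    _ = (b - a) * (∫ x in Ioc a b, ‖f x‖ ^ 2) *
        ((∫ x in Ioc a b, ‖u x‖ ^ 2) - (b - a)⁻¹ * ‖∫ x in Ioc a b, u x‖ ^ 2) := by
      field_simp
    _ ≤ _ := by gcongr

theorem first_f_eigenvalue_lower_bound_circle_general {a b : ℝ} (hab : a < b) {f u u' : ℝ → ℂ}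
    (hf : MemLp f 2 (volume.restrict (Ioc a b))) (hf_int : ∫ θ in a..b, f θ ≠ 0)
    (hu : ContinuousOn u (Icc a b))
    (huu' : ∀ θ ∈ Ioo a b, HasDerivWithinAt u (u' θ) (Ioi θ) θ)
    (hu' : MemLp u' 2 (volume.restrict (Ioc a b))) (hu_per : u a = u b)
    (hfu : ∫ θ in a..b, conj (f θ) * u θ = 0) :
    0 < ‖∫ θ in a..b, f θ‖ ^ 2 / ((b - a) * ∫ θ in a..b, ‖f θ‖ ^ 2) ∧
    (2 * π / (b - a)) ^ 2 * (‖∫ θ in a..b, f θ‖ ^ 2 / ((b - a) * ∫ θ in a..b, ‖f θ‖ ^ 2)) *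
        (∫ θ in a..b, ‖u θ‖ ^ 2)
      ≤ ∫ θ in a..b, ‖u' θ‖ ^ 2 := by
  have hba : 0 < b - a := sub_pos.mpr hab
  have hf_sq_pos : 0 < ∫ θ in a..b, ‖f θ‖ ^ 2 := by
    rw [intervalIntegral.integral_of_le hab.le] at hf_int ⊢
    exact integral_norm_sq_pos_of_integral_ne_zero hf hf_int
  have key :=
    norm_integral_sq_mul_integral_norm_sq_le_of_hasDeriv_right hab hf hu huu' hu' hu_per hfu
  refine ⟨by positivity, ?_⟩
  calc
    _ = (2 * π / (b - a)) ^ 2 * (‖∫ θ in a..b, f θ‖ ^ 2 * (∫ θ in a..b, ‖u θ‖ ^ 2)) /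
        ((b - a) * ∫ θ in a..b, ‖f θ‖ ^ 2) := by ring
    _ ≤ (2 * π / (b - a)) ^ 2 * ((b - a) * (∫ θ in a..b, ‖f θ‖ ^ 2) *
          (((b - a) / (2 * π)) ^ 2 * ∫ θ in a..b, ‖u' θ‖ ^ 2)) /
        ((b - a) * ∫ θ in a..b, ‖f θ‖ ^ 2) := by gcongr (2 * π / (b - a)) ^ 2 * ?_ / _
    _ = _ := by field_simp

end Fourier

theorem first_f_eigenvalue_lower_bound_circle
    (f u : ℝ → ℝ)
    (hf_pos : ∀ θ, 0 < f θ)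
    (hf_cont : Continuous f)
    (hf_per : ∀ θ, f (θ + 2 * π) = f θ)
    (hu_per : ∀ θ, u (θ + 2 * π) = u θ)
    (hu_C1 : ContDiff ℝ 1 u)
    (hfu : ∫ θ in (0:ℝ)..(2 * π), f θ * u θ = 0) :
    0 < (∫ θ in (0:ℝ)..(2 * π), f θ) ^ 2 /
        (2 * π * ∫ θ in (0:ℝ)..(2 * π), (f θ) ^ 2) ∧
    ((∫ θ in (0:ℝ)..(2 * π), f θ) ^ 2 /
        (2 * π * ∫ θ in (0:ℝ)..(2 * π), (f θ) ^ 2)) *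
        (∫ θ in (0:ℝ)..(2 * π), (u θ) ^ 2)
      ≤ ∫ θ in (0:ℝ)..(2 * π), (deriv u θ) ^ 2 := by
  have hf_int : 0 < ∫ θ in (0:ℝ)..(2 * π), f θ :=
    intervalIntegral.intervalIntegral_pos_of_pos (hf_cont.intervalIntegrable _ _) hf_pos
      two_pi_pos
  have complex_bound := first_f_eigenvalue_lower_bound_circle_general two_pi_pos
    (memLp_restrict_Ioc_of_continuousOn_Icc hf_cont.continuousOn 2).ofReal
    (by simpa [intervalIntegral.integral_ofReal] using hf_int.ne')
    (Complex.continuous_ofReal.comp hu_C1.continuous).continuousOn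
    (fun θ _ ↦ (hu_C1.differentiable one_ne_zero θ).hasDerivAt.ofReal_comp.hasDerivWithinAt)
    (memLp_restrict_Ioc_of_continuousOn_Icc (hu_C1.continuous_deriv le_rfl).continuousOn 2).ofReal
    (by simpa using (hu_per 0).symm)
    (by simp [← Complex.ofReal_mul, intervalIntegral.integral_ofReal, hfu])
  simpa [intervalIntegral.integral_ofReal, pi_ne_zero] using complex_bound
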